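/- Assume F is locally connected, σ-compact and locally compact. Let Φ ∈ E_F^R and let r satisfy the standing assumptions, with condition (C_{r,R}). Let {f_n} be a sequence in Hom(F) such that (C1) for every compact K ⊆ F the restrictions {f_n|_K} and {f_n⁻¹|_K} are uniformly bounded, and (C2) {f_n} is ρ⁺_{Φ,r}-Cauchy. Then there exists f ∈ Hom(F) such that f_n → f uniformly on every compact subset of F and f_n⁻¹ → f⁻¹ uniformly on every compact subset of F. -/

import Mathlib

open Filter Topology
open scoped ENNReal

noncomputable section

/-- `|f|_{Φ,r} = sup_{x ∈ F} r(‖f(x) − x‖)/Φ(x) ∈ [0,∞]`. -/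
def phiNorm {E : Type*} [NormedAddCommGroup E] (F : Set E) (Φ : F → ℝ) (r : ℝ → ℝ)
    (f : F → F) : ℝ≥0∞ :=
  ⨆ x : F, ENNReal.ofReal (r ‖(f x : E) - (x : E)‖ / Φ x)

/-- The premetric `ρ_{Φ,r}(f,g) = max(|f∘g⁻¹|_{Φ,r}, |f⁻¹∘g|_{Φ,r})`. -/
def phiDist {E : Type*} [NormedAddCommGroup E] (F : Set E) (Φ : F → ℝ) (r : ℝ → ℝ)
    (f g : F ≃ₜ F) : ℝ≥0∞ :=
  max (phiNorm F Φ r fun x => f (g.symm x)) (phiNorm F Φ r fun x => f.symm (g x))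

/-- `H_{Φ,r} = {f ∈ Hom(F) : |f|_{Φ,r} < ∞ and |f⁻¹|_{Φ,r} < ∞}`. -/
def Hgroup {E : Type*} [NormedAddCommGroup E] (F : Set E) (Φ : F → ℝ) (r : ℝ → ℝ) :
    Set (F ≃ₜ F) :=
  {f | phiNorm F Φ r ⇑f < ⊤ ∧ phiNorm F Φ r ⇑f.symm < ⊤}

/-- A growth function `R : [0,∞) → (0,∞)`: continuous and subadditive. -/
structure GrowthFun (R : ℝ → ℝ) : Prop where
  pos : ∀ u, 0 ≤ u → 0 < R u
  cont : ContinuousOn R (Set.Ici 0)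
  subadd : ∀ u v, 0 ≤ u → 0 ≤ v → R (u + v) ≤ R u + R v

/-- `Φ ∈ E_F^R`, with constants `m` (condition (G1)) and `β > γ > 0` (condition (G3));
condition (G2) is the coercivity. -/
structure MemE {E : Type*} [NormedAddCommGroup E] (F : Set E) (R : ℝ → ℝ) (Φ : F → ℝ)
    (m β γ : ℝ) : Prop where
  cont : Continuous Φ
  nonneg : ∀ x : F, 0 ≤ Φ x
  m_pos : 0 < m
  m_le : ∀ x : F, m ≤ Φ x
  coercive : ∀ C : ℝ, ∃ M : ℝ, ∀ x : F, M ≤ ‖(x : E)‖ → C ≤ Φ x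
  gamma_pos : 0 < γ
  gamma_lt_beta : γ < β
  lower : ∀ x : F, γ * R ‖(x : E)‖ ≤ Φ x
  upper : ∀ x : F, Φ x ≤ β * R ‖(x : E)‖

/-- The standing assumptions on `r : [0,∞) → [0,∞)`: `r(x) = 0` iff `x = 0`, continuity
at `0`, nondecreasing, subadditive. -/
structure StandingR (r : ℝ → ℝ) : Prop where
  nonneg : ∀ u, 0 ≤ u → 0 ≤ r u
  zero_iff : ∀ u, 0 ≤ u → (r u = 0 ↔ u = 0)
  cont_at_zero : ContinuousWithinAt r (Set.Ici 0) 0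
  mono : MonotoneOn r (Set.Ici 0)
  subadd : ∀ u v, 0 ≤ u → 0 ≤ v → r (u + v) ≤ r u + r v

/-- Condition `(A_r)`: lower semicontinuity of `r` for the simple convergence on `F`. -/
def Ar {E : Type*} [NormedAddCommGroup E] (F : Set E) (r : ℝ → ℝ) : Prop :=
  ∀ (g : ℕ → F → F) (x : F),
    r (Filter.liminf (fun n => ‖(g n x : E)‖) Filter.atTop) ≤
      Filter.liminf (fun n => r ‖(g n x : E)‖) Filter.atTop

/-- The ball `B⁻(f,α) = {g ∈ H_{Φ,r} : ρ_{Φ,r}(f,g) < α}`. -/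
def BallMinus {E : Type*} [NormedAddCommGroup E] (F : Set E) (Φ : F → ℝ) (r : ℝ → ℝ)
    (f : F ≃ₜ F) (α : ℝ) : Set (F ≃ₜ F) :=
  {g | g ∈ Hgroup F Φ r ∧ phiDist F Φ r f g < ENNReal.ofReal α}

/-- The ball `B⁺(f,α) = {g ∈ H_{Φ,r} : ρ_{Φ,r}(g,f) < α}`. -/
def BallPlus {E : Type*} [NormedAddCommGroup E] (F : Set E) (Φ : F → ℝ) (r : ℝ → ℝ)
    (f : F ≃ₜ F) (α : ℝ) : Set (F ≃ₜ F) :=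
  {g | g ∈ Hgroup F Φ r ∧ phiDist F Φ r g f < ENNReal.ofReal α}

/-- The family `T⁻(ρ_{Φ,r})`. -/
def Tminus {E : Type*} [NormedAddCommGroup E] (F : Set E) (Φ : F → ℝ) (r : ℝ → ℝ) :
    Set (Set (F ≃ₜ F)) :=
  {H | H ⊆ Hgroup F Φ r ∧ ∀ f ∈ H, ∃ α : ℝ, 0 < α ∧ BallMinus F Φ r f α ⊆ H}

/-- The family `T⁺(ρ_{Φ,r})`. -/
def Tplus {E : Type*} [NormedAddCommGroup E] (F : Set E) (Φ : F → ℝ) (r : ℝ → ℝ) :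
    Set (Set (F ≃ₜ F)) :=
  {H | H ⊆ Hgroup F Φ r ∧ ∀ f ∈ H, ∃ α : ℝ, 0 < α ∧ BallPlus F Φ r f α ⊆ H}

/-- The `r`-Lipschitz constant `λ_r(f) ∈ [0,∞]`. -/
def lambdaR {E : Type*} [NormedAddCommGroup E] (F : Set E) (r : ℝ → ℝ) (f : F → F) : ℝ≥0∞ :=
  ⨆ (x : F) (y : F) (_ : x ≠ y),
    ENNReal.ofReal (r ‖(f x : E) - (f y : E)‖ / r ‖(x : E) - (y : E)‖)

/-- `L_r(F)`, the set of `r`-Lipeomorphisms of `F`. -/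
def LipGroup {E : Type*} [NormedAddCommGroup E] (F : Set E) (r : ℝ → ℝ) : Set (F ≃ₜ F) :=
  {f | lambdaR F r ⇑f < ⊤ ∧ lambdaR F r ⇑f.symm < ⊤}

/-- The conjugacy operator `L_{f,g}(h) = f ∘ h ∘ g⁻¹`. -/
def conjOp {E : Type*} [NormedAddCommGroup E] (F : Set E) (f g : F ≃ₜ F) :
    (F ≃ₜ F) → (F ≃ₜ F) :=
  fun h => (g.symm.trans h).trans f

/-!
Convergence of `f_n` is limited by two things: the weight `Φ` in `ρ_{Φ,r}` is unbounded, and `F`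
need not be complete. Since `Φ` is dominated by an affine function of `r ‖·‖`, an estimate
`r ‖y - z‖ ≤ ε * max (Φ y) (Φ z)` with `ε` small makes the weight absorb itself: it is bounded in
terms of `‖y‖` alone. Hence `f_p x` and `f_q x` are close, uniformly over all `x` for which `f_p x`
is bounded, and the same holds for the inverses. Together with (C1) this gives Cauchy sequences on
compact sets. Applied to the inverses at the points `f_p x`, it also gives `f_q⁻¹ (f_p x) → x`.
So, for a fixed large `q`, the sequence `f_p x` stays in the image under `f_q` of a compact
neighbourhood of `x`, and it converges although `F` may be incomplete.
-/

open Bornology Set Uniformity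

section UniformLimits

variable {ι X Y : Type*} {l : Filter ι}

theorem apply_eq_of_tendstoLocallyUniformly_of_tendsto [l.NeBot] [TopologicalSpace X]
    [UniformSpace Y] [T2Space Y] {f : ι → X → Y} {g : ι → X} {f' : X → Y} {x : X} {y : Y}
    (hf : TendstoLocallyUniformly f f' l) (hf' : ContinuousAt f' x) (hg : Tendsto g l (𝓝 x))
    (hfg : ∀ n, f n (g n) = y) : f' x = y :=
  tendsto_nhds_unique (hf.tendsto_comp hf' hg) (by simp only [hfg, tendsto_const_nhds])

theorem exists_tendsto_of_cauchy_of_tendsto_symm_apply [l.NeBot] [TopologicalSpace X]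
    [WeaklyLocallyCompactSpace X] [UniformSpace Y] {f : ι → X ≃ₜ Y} {x : X}
    (hc : Cauchy (map (f · x) l))
    (hx : Tendsto (fun n : ι × ι => (f n.2).symm (f n.1 x)) (l ×ˢ l) (𝓝 x)) :
    ∃ y, Tendsto (f · x) l (𝓝 y) := by
  obtain ⟨K, hK, hKx⟩ := exists_compact_mem_nhds x
  obtain ⟨q, hq⟩ := ((hx.comp tendsto_prod_swap).eventually hKx).curry.exists
  have hmem : ∀ᶠ p in l, f p x ∈ f q '' K :=
    hq.mono fun p hp => ⟨(f q).symm (f p x), hp, (f q).apply_symm_apply _⟩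
  obtain ⟨y, -, hy⟩ := (hK.image (f q).continuous).isComplete _ hc (le_principal_iff.2 hmem)
  exact ⟨y, hy⟩

theorem exists_continuous_tendstoLocallyUniformly [l.NeBot] [TopologicalSpace X]
    [LocallyCompactSpace X] [UniformSpace Y] {f : ι → X ≃ₜ Y}
    (hf : ∀ K, IsCompact K → UniformCauchySeqOn (fun n => ⇑(f n)) l K)
    (hx : ∀ x, Tendsto (fun n : ι × ι => (f n.2).symm (f n.1 x)) (l ×ˢ l) (𝓝 x)) :
    ∃ g : X → Y, Continuous g ∧ TendstoLocallyUniformly (fun n => ⇑(f n)) g l := by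
  have hlim (x : X) : ∃ y, Tendsto (f · x) l (𝓝 y) :=
    exists_tendsto_of_cauchy_of_tendsto_symm_apply
      ((hf {x} isCompact_singleton).cauchy_map rfl) (hx x)
  choose g hg using hlim
  have hfg : TendstoLocallyUniformly (fun n => ⇑(f n)) g l :=
    tendstoLocallyUniformly_iff_forall_isCompact.2 fun K hK =>
      (hf K hK).tendstoUniformlyOn_of_tendsto fun x _ => hg x
  exact ⟨g, hfg.continuous (.of_forall fun n => (f n).continuous), hfg⟩

theorem exists_homeomorph_tendstoLocallyUniformly [l.NeBot] [UniformSpace X] [UniformSpace Y]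
    [T2Space X] [T2Space Y] [LocallyCompactSpace X] [LocallyCompactSpace Y] {f : ι → X ≃ₜ Y}
    (hf : ∀ K, IsCompact K → UniformCauchySeqOn (fun n => ⇑(f n)) l K)
    (hf' : ∀ K, IsCompact K → UniformCauchySeqOn (fun n => ⇑(f n).symm) l K)
    (hx : ∀ x, Tendsto (fun n : ι × ι => (f n.2).symm (f n.1 x)) (l ×ˢ l) (𝓝 x))
    (hy : ∀ y, Tendsto (fun n : ι × ι => f n.2 ((f n.1).symm y)) (l ×ˢ l) (𝓝 y)) :
    ∃ g : X ≃ₜ Y, TendstoLocallyUniformly (fun n => ⇑(f n)) g l ∧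
      TendstoLocallyUniformly (fun n => ⇑(f n).symm) g.symm l := by
  obtain ⟨g, hg, hfg⟩ := exists_continuous_tendstoLocallyUniformly hf hx
  obtain ⟨h, hh, hfh⟩ := exists_continuous_tendstoLocallyUniformly (f := fun n => (f n).symm) hf' hy
  have hhg (x : X) : h (g x) = x :=
    apply_eq_of_tendstoLocallyUniformly_of_tendsto hfh hh.continuousAt
      (hfg.tendsto_comp hg.continuousAt tendsto_const_nhds) fun n => (f n).symm_apply_apply x
  have hgh (y : Y) : g (h y) = y :=
    apply_eq_of_tendstoLocallyUniformly_of_tendsto hfg hg.continuousAt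
      (hfh.tendsto_comp hh.continuousAt tendsto_const_nhds) fun n => (f n).apply_symm_apply y
  exact ⟨⟨⟨g, h, hhg, hgh⟩, hg, hh⟩, hfg, hfh⟩

/-- The maps `f n` are Cauchy along `l`, uniformly over all points whose image under one of the two
compared maps lies in a given bounded set. Boundedness is asked of the image, not of the point, so
that the notion also applies to `(f n).symm` at the moving points `f n x`. -/
def CauchyOnBoundedImages [UniformSpace Y] [Bornology Y] (f : ι → X → Y) (l : Filter ι) : Prop :=
  ∀ s : Set Y, IsBounded s → ∀ u ∈ 𝓤 Y, ∀ᶠ n : ι × ι in l ×ˢ l,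
    ∀ x, f n.1 x ∈ s → (f n.1 x, f n.2 x) ∈ u

theorem CauchyOnBoundedImages.uniformCauchySeqOn [UniformSpace Y] [Bornology Y] {f : ι → X → Y}
    (hf : CauchyOnBoundedImages f l) {K : Set X} (hK : IsBounded (⋃ n, f n '' K)) :
    UniformCauchySeqOn f l K := fun u hu =>
  (hf _ hK u hu).mono fun n hn x hx => hn x (mem_iUnion_of_mem n.1 (mem_image_of_mem _ hx))

theorem CauchyOnBoundedImages.tendsto_apply_of_leftInverse [UniformSpace Y] [Bornology Y]
    {f : ι → X → Y} {g : ι → Y → X} (hf : CauchyOnBoundedImages f l)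
    (hfg : ∀ n, Function.LeftInverse (f n) (g n)) (y : Y) :
    Tendsto (fun n : ι × ι => f n.2 (g n.1 y)) (l ×ˢ l) (𝓝 y) := by
  refine Uniform.tendsto_nhds_right.2 fun u hu => ?_
  rw [mem_map]
  filter_upwards [hf {y} isBounded_singleton u hu] with n hn
  simpa only [mem_preimage, hfg n.1 y] using hn (g n.1 y) (hfg n.1 y)

theorem exists_homeomorph_tendstoLocallyUniformly_of_cauchyOnBoundedImages [l.NeBot]
    [UniformSpace X] [Bornology X] [UniformSpace Y] [Bornology Y] [T2Space X] [T2Space Y]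
    [LocallyCompactSpace X] [LocallyCompactSpace Y] {f : ι → X ≃ₜ Y}
    (hf : CauchyOnBoundedImages (fun n => ⇑(f n)) l)
    (hf' : CauchyOnBoundedImages (fun n => ⇑(f n).symm) l)
    (hbdd : ∀ K, IsCompact K → IsBounded (⋃ n, f n '' K))
    (hbdd' : ∀ K, IsCompact K → IsBounded (⋃ n, (f n).symm '' K)) :
    ∃ g : X ≃ₜ Y, TendstoLocallyUniformly (fun n => ⇑(f n)) g l ∧
      TendstoLocallyUniformly (fun n => ⇑(f n).symm) g.symm l :=
  exists_homeomorph_tendstoLocallyUniformly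
    (fun K hK => hf.uniformCauchySeqOn (hbdd K hK))
    (fun K hK => hf'.uniformCauchySeqOn (hbdd' K hK))
    (hf'.tendsto_apply_of_leftInverse fun n => (f n).symm_apply_apply)
    (hf.tendsto_apply_of_leftInverse fun n => (f n).apply_symm_apply)

end UniformLimits

section Modulus

variable {E : Type*} [NormedAddCommGroup E] {F : Set E} {Φ : F → ℝ} {r : ℝ → ℝ} {A B : ℝ}

theorem StandingR.pos (hr : StandingR r) {u : ℝ} (hu : 0 < u) : 0 < r u :=
  (hr.nonneg u hu.le).lt_of_ne' fun h => hu.ne' ((hr.zero_iff u hu.le).1 h)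

theorem StandingR.map_norm_le_add_map_norm_sub (hr : StandingR r) (y z : E) :
    r ‖z‖ ≤ r ‖y‖ + r ‖y - z‖ :=
  (hr.mono (norm_nonneg z) (mem_Ici.2 (by positivity)) (norm_le_insert y z)).trans
    (hr.subadd _ _ (norm_nonneg _) (norm_nonneg _))

theorem StandingR.max_weight_le (hr : StandingR r) (hΦ : ∀ x, 0 ≤ Φ x) (hA : 0 ≤ A)
    (hΦr : ∀ x : F, Φ x ≤ A * r ‖(x : E)‖ + B) {ε : ℝ} (hε : ε * A ≤ 1 / 2) {y z : F}
    (hyz : r ‖(y : E) - z‖ ≤ ε * max (Φ y) (Φ z)) :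
    max (Φ y) (Φ z) ≤ 2 * (A * r ‖(y : E)‖ + B) := by
  rcases le_total (Φ z) (Φ y) with h | h
  · rw [max_eq_left h]
    linarith [hΦ y, hΦr y]
  · rw [max_eq_right h] at hyz ⊢
    have habsorb : Φ z ≤ A * r ‖(y : E)‖ + B + 1 / 2 * Φ z := calc
      Φ z ≤ A * r ‖(z : E)‖ + B := hΦr z
      _ ≤ A * (r ‖(y : E)‖ + ε * Φ z) + B := by
        gcongr
        exact (hr.map_norm_le_add_map_norm_sub _ _).trans (by gcongr)
      _ = A * r ‖(y : E)‖ + B + ε * A * Φ z := by ring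
      _ ≤ A * r ‖(y : E)‖ + B + 1 / 2 * Φ z := by gcongr; exact hΦ z
    linarith

theorem StandingR.exists_forall_dist_lt (hr : StandingR r) (hΦ : ∀ x, 0 ≤ Φ x) (hA : 0 ≤ A)
    (hΦr : ∀ x : F, Φ x ≤ A * r ‖(x : E)‖ + B) (M : ℝ) {δ : ℝ} (hδ : 0 < δ) :
    ∃ ε > 0, ∀ y z : F, ‖(y : E)‖ ≤ M →
      r ‖(y : E) - z‖ ≤ ε * max (Φ y) (Φ z) → dist y z < δ := by
  have hsmall (c : ℝ) {t : ℝ} (ht : 0 < t) : ∀ᶠ ε in 𝓝[>] (0 : ℝ), ε * c < t :=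
    ((continuous_mul_const c).tendsto' 0 0 (zero_mul c)).mono_left nhdsWithin_le_nhds
      |>.eventually_lt_const ht
  obtain ⟨ε, hεA, hεδ, hε⟩ := ((hsmall A one_half_pos).and
    ((hsmall (2 * (A * r M + B)) (hr.pos hδ)).and self_mem_nhdsWithin)).exists
  refine ⟨ε, hε, fun y z hy hyz => ?_⟩
  have hry : r ‖(y : E)‖ ≤ r M := hr.mono (norm_nonneg _) ((norm_nonneg _).trans hy) hy
  have hlt : r ‖(y : E) - z‖ < r δ := calc
    r ‖(y : E) - z‖ ≤ ε * max (Φ y) (Φ z) := hyz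
    _ ≤ ε * (2 * (A * r ‖(y : E)‖ + B)) := by
      gcongr
      exact hr.max_weight_le hΦ hA hΦr hεA.le hyz
    _ ≤ ε * (2 * (A * r M + B)) := by gcongr
    _ < r δ := hεδ
  rw [Subtype.dist_eq, dist_eq_norm]
  exact hr.mono.reflect_lt (norm_nonneg _) hδ.le hlt

theorem MemE.pos {R : ℝ → ℝ} {m β γ : ℝ} (hΦ : MemE F R Φ m β γ) (x : F) : 0 < Φ x :=
  hΦ.m_pos.trans_le (hΦ.m_le x)

theorem MemE.beta_pos {R : ℝ → ℝ} {m β γ : ℝ} (hΦ : MemE F R Φ m β γ) : 0 < β :=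
  hΦ.gamma_pos.trans hΦ.gamma_lt_beta

theorem MemE.le_mul_add {R : ℝ → ℝ} {m β γ a b : ℝ} (hΦ : MemE F R Φ m β γ)
    (hRr : ∀ u, 0 ≤ u → R u ≤ a * r u + b) (x : F) :
    Φ x ≤ β * a * r ‖(x : E)‖ + β * b := calc
  Φ x ≤ β * R ‖(x : E)‖ := hΦ.upper x
  _ ≤ β * (a * r ‖(x : E)‖ + b) := by
    gcongr
    exacts [hΦ.beta_pos.le, hRr _ (norm_nonneg _)]
  _ = β * a * r ‖(x : E)‖ + β * b := by ring

end Modulus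

section Premetric

variable {ι E : Type*} [NormedAddCommGroup E] {F : Set E} {Φ : F → ℝ} {r : ℝ → ℝ}

theorem le_mul_of_phiNorm_le (hΦ : ∀ x, 0 < Φ x) {f : F → F} {ε : ℝ} (hε : 0 ≤ ε)
    (hf : phiNorm F Φ r f ≤ ENNReal.ofReal ε) (x : F) : r ‖(f x : E) - x‖ ≤ ε * Φ x :=
  (div_le_iff₀ (hΦ x)).1 ((ENNReal.ofReal_le_ofReal_iff hε).1 (iSup_le_iff.1 hf x))

theorem phiDist_symm_symm (f g : F ≃ₜ F) : phiDist F Φ r f.symm g.symm = phiDist F Φ r f g :=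
  max_comm _ _

theorem le_mul_of_phiDist_le (hΦ : ∀ x, 0 < Φ x) {f g : F ≃ₜ F} {ε : ℝ} (hε : 0 ≤ ε)
    (hfg : phiDist F Φ r f g ≤ ENNReal.ofReal ε) (x : F) :
    r ‖(f x : E) - g x‖ ≤ ε * Φ (g x) := by
  simpa only [g.symm_apply_apply] using
    le_mul_of_phiNorm_le hΦ hε ((le_max_left _ _).trans hfg) (g x)

/-- The `ρ⁺_{Φ,r}`-Cauchy condition. The premetric is not symmetric, and only pairs whose first
index is the larger one are compared. -/
def CauchyPlus [LE ι] (F : Set E) (Φ : F → ℝ) (r : ℝ → ℝ) (f : ι → F ≃ₜ F) : Prop :=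
  ∀ ε : ℝ, 0 < ε → ∃ N, ∀ p q, N ≤ q → q ≤ p → phiDist F Φ r (f p) (f q) ≤ ENNReal.ofReal ε

theorem CauchyPlus.symm [LE ι] {f : ι → F ≃ₜ F} (hf : CauchyPlus F Φ r f) :
    CauchyPlus F Φ r fun n => (f n).symm := by
  simpa only [CauchyPlus, phiDist_symm_symm] using hf

theorem CauchyPlus.exists_forall_le_mul_max [LinearOrder ι] {f : ι → F ≃ₜ F}
    (hf : CauchyPlus F Φ r f) (hΦ : ∀ x, 0 < Φ x) {ε : ℝ} (hε : 0 < ε) :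
    ∃ N, ∀ p q, N ≤ p → N ≤ q → ∀ x,
      r ‖(f p x : E) - f q x‖ ≤ ε * max (Φ (f p x)) (Φ (f q x)) := by
  obtain ⟨N, hN⟩ := hf ε hε
  refine ⟨N, fun p q hp hq x => ?_⟩
  wlog hqp : q ≤ p generalizing p q
  · simpa only [norm_sub_rev, max_comm] using this q p hq hp (le_of_not_ge hqp)
  exact (le_mul_of_phiDist_le hΦ hε.le (hN p q hq hqp) x).trans (by gcongr; exact le_max_right _ _)

theorem CauchyPlus.cauchyOnBoundedImages [LinearOrder ι] {A B : ℝ} {f : ι → F ≃ₜ F}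
    (hf : CauchyPlus F Φ r f) (hr : StandingR r) (hΦ : ∀ x, 0 < Φ x) (hA : 0 ≤ A)
    (hΦr : ∀ x : F, Φ x ≤ A * r ‖(x : E)‖ + B) :
    CauchyOnBoundedImages (fun n => ⇑(f n)) atTop := by
  intro s hs u hu
  obtain ⟨δ, hδ, hδu⟩ := Metric.mem_uniformity_dist.1 hu
  obtain ⟨M, hM⟩ := (isBounded_image_subtype_val.2 hs).exists_norm_le
  obtain ⟨ε, hε, hclose⟩ := hr.exists_forall_dist_lt (fun x => (hΦ x).le) hA hΦr M hδ
  obtain ⟨N, hN⟩ := hf.exists_forall_le_mul_max hΦ hε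
  filter_upwards [(eventually_ge_atTop N).prod_mk (eventually_ge_atTop N)] with n hn x hx
  exact hδu (hclose _ _ (hM _ (mem_image_of_mem _ hx)) (hN _ _ hn.1 hn.2 x))

end Premetric

section Subtype

variable {ι X E : Type*} {F : Set E}

theorem isBounded_iUnion_image_of_norm_le [SeminormedAddCommGroup E] {f : ι → X → F}
    {K : Set X} {M : ℝ} (hM : ∀ n, ∀ x ∈ K, ‖(f n x : E)‖ ≤ M) : IsBounded (⋃ n, f n '' K) := by
  refine isBounded_image_subtype_val.1 (isBounded_iff_forall_norm_le.2 ⟨M, ?_⟩)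
  rw [forall_mem_image]
  intro y hy
  obtain ⟨n, x, hx, rfl⟩ := mem_iUnion.1 hy
  exact hM n x hx

theorem tendstoUniformlyOn_coe_of_isCompact [TopologicalSpace X] [UniformSpace E] {l : Filter ι}
    {f : ι → X → F} {g : X → F} (hfg : TendstoLocallyUniformly f g l) (K : Set X)
    (hK : IsCompact K) :
    TendstoUniformlyOn (fun n x => (f n x : E)) (fun x => (g x : E)) l K :=
  uniformContinuous_subtype_val.comp_tendstoUniformlyOn <|
    (tendstoLocallyUniformlyOn_iff_tendstoUniformlyOn_of_compact hK).1
      hfg.tendstoLocallyUniformlyOn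

end Subtype

theorem statement9_general {ι E : Type*} [LinearOrder ι] [Nonempty ι] [NormedAddCommGroup E]
    {F : Set E} [LocallyCompactSpace F] {Φ : F → ℝ} {r : ℝ → ℝ} {A B : ℝ} (hr : StandingR r)
    (hΦ : ∀ x, 0 < Φ x) (hA : 0 ≤ A) (hΦr : ∀ x : F, Φ x ≤ A * r ‖(x : E)‖ + B)
    {f : ι → F ≃ₜ F}
    (hbdd : ∀ K : Set F, IsCompact K → ∃ M : ℝ, ∀ n, ∀ x ∈ K,
      ‖(f n x : E)‖ ≤ M ∧ ‖((f n).symm x : E)‖ ≤ M)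
    (hf : CauchyPlus F Φ r f) :
    ∃ g : F ≃ₜ F,
      (∀ K : Set F, IsCompact K →
        TendstoUniformlyOn (fun n (x : F) => (f n x : E)) (fun x => (g x : E)) atTop K) ∧
      (∀ K : Set F, IsCompact K →
        TendstoUniformlyOn (fun n (x : F) => ((f n).symm x : E)) (fun x => (g.symm x : E))
          atTop K) := by
  have hcauchy := hf.cauchyOnBoundedImages hr hΦ hA hΦr
  have hcauchy' := hf.symm.cauchyOnBoundedImages hr hΦ hA hΦr
  obtain ⟨g, hg, hg'⟩ := exists_homeomorph_tendstoLocallyUniformly_of_cauchyOnBoundedImages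
    hcauchy hcauchy'
    (fun K hK => (hbdd K hK).elim fun _ hM =>
      isBounded_iUnion_image_of_norm_le fun n x hx => (hM n x hx).1)
    (fun K hK => (hbdd K hK).elim fun _ hM =>
      isBounded_iUnion_image_of_norm_le fun n x hx => (hM n x hx).2)
  exact ⟨g, tendstoUniformlyOn_coe_of_isCompact hg, tendstoUniformlyOn_coe_of_isCompact hg'⟩

/-- Under (C1) and (C2), there is `f ∈ Hom(F)` with `f_n → f` and `f_n⁻¹ → f⁻¹`
uniformly on every compact subset of `F`. -/
theorem statement9 {E : Type*} [NormedAddCommGroup E] [NormedSpace ℝ E] [FiniteDimensional ℝ E]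
    (F : Set E) (hFnc : ¬ IsCompact F)
    [LocallyConnectedSpace ↥F] [SigmaCompactSpace ↥F] [LocallyCompactSpace ↥F]
    (R : ℝ → ℝ) (hR : GrowthFun R)
    (Φ : F → ℝ) (m β γ : ℝ) (hΦ : MemE F R Φ m β γ)
    (r : ℝ → ℝ) (hr : StandingR r)
    (a b : ℝ) (ha : 0 < a) (hb : 0 < b) (hCrR : ∀ u, 0 ≤ u → R u ≤ a * r u + b)
    (fn : ℕ → F ≃ₜ F)
    (hC1 : ∀ K : Set F, IsCompact K → ∃ M : ℝ, ∀ n : ℕ, ∀ x ∈ K,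
      ‖(fn n x : E)‖ ≤ M ∧ ‖((fn n).symm x : E)‖ ≤ M)
    (hC2 : ∀ ε : ℝ, 0 < ε → ∃ N : ℕ, ∀ p q : ℕ, N ≤ q → q ≤ p →
      phiDist F Φ r (fn p) (fn q) ≤ ENNReal.ofReal ε) :
    ∃ f : F ≃ₜ F,
      (∀ K : Set F, IsCompact K →
        TendstoUniformlyOn (fun n (x : F) => (fn n x : E)) (fun x => (f x : E))
          Filter.atTop K) ∧
      (∀ K : Set F, IsCompact K →
        TendstoUniformlyOn (fun n (x : F) => ((fn n).symm x : E)) (fun x => (f.symm x : E))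
          Filter.atTop K) := by
  exact statement9_general hr hΦ.pos (mul_pos hΦ.beta_pos ha).le (hΦ.le_mul_add hCrR) hC1 hC2
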